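/- arXiv:1308.2418 — 2 statements merged into one kernel-verified Lean document; each statement's English description precedes it below -/
import Mathlib

section
/- Let (fₖ) be a sequence of H-valued random variables with sup_k ‖fₖ‖ ∈ L_p, p > 1, and (nₖ) any sequence of indices. Then E[sup_k ‖E[fₖ | F_{nₖ}]‖^p] ≤ (p/(p−1))^p E[(sup_k ‖fₖ‖)^p]. -/
open MeasureTheory
open scoped ENNReal NNReal

/-- A self-improving bound `a ≤ c b^{1/p} a^{1/q}` between conjugate powers, with `a` finite. -/
theorem ENNReal.le_rpow_mul_of_le_mul_rpow_mul_rpow {a b c : ℝ≥0∞} {p q : ℝ}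
    (hpq : p.HolderConjugate q) (ha : a ≠ ∞) (h : a ≤ c * (b ^ (1 / p) * a ^ (1 / q))) :
    a ≤ c ^ p * b := by
  rcases eq_or_ne a 0 with rfl | ha0
  · exact zero_le
  have hsplit : a = a ^ (1 / p) * a ^ (1 / q) := by
    rw [← ENNReal.rpow_add _ _ ha0 ha, one_div, one_div, hpq.inv_add_inv_eq_one, ENNReal.rpow_one]
  have hq0 : a ^ (1 / q) ≠ 0 := by simp [ENNReal.rpow_eq_zero_iff, ha0, ha]
  have hqt : a ^ (1 / q) ≠ ∞ := ENNReal.rpow_ne_top_of_nonneg (one_div_nonneg.2 hpq.symm.nonneg) ha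
  have hroot : a ^ (1 / p) ≤ c * b ^ (1 / p) := by
    rw [← ENNReal.mul_le_mul_iff_left hq0 hqt, ← hsplit, mul_assoc]
    exact h
  have hpow := ENNReal.rpow_le_rpow hroot hpq.nonneg
  rwa [ENNReal.mul_rpow_of_nonneg _ _ hpq.nonneg, ← ENNReal.rpow_mul, ← ENNReal.rpow_mul,
    one_div_mul_cancel hpq.ne_zero, ENNReal.rpow_one, ENNReal.rpow_one] at hpow

/-- A weak-type estimate of Doob type for `Y` in terms of `X` gives
`∫ Y^p ≤ p/(p-1) ∫ X Y^{p-1}`. -/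
theorem MeasureTheory.lintegral_rpow_le_lintegral_mul_rpow_of_mul_meas_le {Ω : Type*}
    {mΩ : MeasurableSpace Ω} {μ : Measure Ω} {X : Ω → ℝ≥0∞} {Y : Ω → ℝ} (hX : AEMeasurable X μ)
    (hY : Measurable Y) (hY0 : 0 ≤ Y) {p : ℝ} (hp : 1 < p)
    (h : ∀ ε : ℝ≥0, ε * μ {ω | (ε : ℝ) ≤ Y ω} ≤ ∫⁻ ω in {ω | (ε : ℝ) ≤ Y ω}, X ω ∂μ) :
    ∫⁻ ω, ENNReal.ofReal (Y ω) ^ p ∂μ ≤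
      ENNReal.ofReal (p / (p - 1)) * ∫⁻ ω, X ω * ENNReal.ofReal (Y ω) ^ (p - 1) ∂μ := by
  have hp1 : 0 < p - 1 := sub_pos.2 hp
  have hp0 : 0 < p := by linarith
  have hYpow {r : ℝ} (hr : 0 < r) (ω : Ω) : ENNReal.ofReal (Y ω) ^ r = ENNReal.ofReal (Y ω ^ r) :=
    ENNReal.ofReal_rpow_of_nonneg (hY0 ω) hr.le
  have hdens : ∫⁻ ω, X ω * ENNReal.ofReal (Y ω) ^ (p - 1) ∂μ =
      ENNReal.ofReal (p - 1) * ∫⁻ t in Set.Ioi (0 : ℝ),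
        μ.withDensity X {ω | t ≤ Y ω} * ENNReal.ofReal (t ^ (p - 1 - 1)) := by
    rw [← lintegral_rpow_eq_lintegral_meas_le_mul _ (ae_of_all _ hY0) hY.aemeasurable hp1,
      lintegral_withDensity_eq_lintegral_mul₀ hX (by fun_prop)]
    simp [hYpow hp1]
  rw [hdens, ← mul_assoc, ← ENNReal.ofReal_mul (by positivity), div_mul_cancel₀ _ hp1.ne']
  simp_rw [hYpow hp0]
  rw [lintegral_rpow_eq_lintegral_meas_le_mul _ (ae_of_all _ hY0) hY.aemeasurable hp0]
  gcongr ENNReal.ofReal p * ?_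
  refine setLIntegral_mono' measurableSet_Ioi fun t (ht : 0 < t) ↦ ?_
  have hpow : t ^ (p - 1) = t * t ^ (p - 1 - 1) := by
    rw [Real.rpow_sub_one ht.ne' (p - 1), mul_div_cancel₀ _ ht.ne']
  rw [withDensity_apply _ (measurableSet_le measurable_const hY), hpow, ENNReal.ofReal_mul ht.le,
    ← mul_assoc, mul_comm _ (ENNReal.ofReal t)]
  gcongr
  simpa only [Real.coe_toNNReal _ ht.le] using! h t.toNNReal

/-- A weak-type estimate of Doob type implies the strong `L^p` estimate with constant
`(p/(p-1))^p`. -/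
theorem MeasureTheory.lintegral_rpow_le_of_mul_meas_le {Ω : Type*}
    {mΩ : MeasurableSpace Ω} {μ : Measure Ω} {X : Ω → ℝ≥0∞} {Y : Ω → ℝ} (hX : AEMeasurable X μ)
    (hY : Measurable Y) (hY0 : 0 ≤ Y) {p : ℝ} (hp : 1 < p)
    (hYp : ∫⁻ ω, ENNReal.ofReal (Y ω) ^ p ∂μ ≠ ∞)
    (h : ∀ ε : ℝ≥0, ε * μ {ω | (ε : ℝ) ≤ Y ω} ≤ ∫⁻ ω in {ω | (ε : ℝ) ≤ Y ω}, X ω ∂μ) :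
    ∫⁻ ω, ENNReal.ofReal (Y ω) ^ p ∂μ ≤
      ENNReal.ofReal ((p / (p - 1)) ^ p) * ∫⁻ ω, X ω ^ p ∂μ := by
  have hp1 : 0 < p - 1 := sub_pos.2 hp
  have hp0 : 0 < p := by linarith
  have hpq : p.HolderConjugate p.conjExponent := .conjExponent hp
  rw [← ENNReal.ofReal_rpow_of_nonneg (by positivity) hp0.le]
  refine ENNReal.le_rpow_mul_of_le_mul_rpow_mul_rpow hpq hYp ?_
  refine (lintegral_rpow_le_lintegral_mul_rpow_of_mul_meas_le hX hY hY0 hp h).trans ?_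
  gcongr
  refine (ENNReal.lintegral_mul_le_Lp_mul_Lq μ hpq hX
    (g := fun ω ↦ ENNReal.ofReal (Y ω) ^ (p - 1)) (by fun_prop)).trans_eq ?_
  simp_rw [← ENNReal.rpow_mul, hpq.sub_one_mul_conj]

/-- **Doob's `L^p` inequality** for the running maximum of a nonnegative submartingale. -/
theorem MeasureTheory.Submartingale.lintegral_sup'_rpow_le {Ω : Type*} {mΩ : MeasurableSpace Ω}
    {μ : Measure Ω} [IsFiniteMeasure μ] {𝒢 : Filtration ℕ mΩ} {X : ℕ → Ω → ℝ}
    (hX : Submartingale X 𝒢 μ) (hX0 : 0 ≤ X) {p : ℝ} (hp : 1 < p)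
    (hXp : ∀ n, MemLp (X n) (ENNReal.ofReal p) μ) (n : ℕ) :
    ∫⁻ ω, ENNReal.ofReal
        ((Finset.range (n + 1)).sup' Finset.nonempty_range_add_one fun k ↦ X k ω) ^ p ∂μ ≤
      ENNReal.ofReal ((p / (p - 1)) ^ p) * ∫⁻ ω, ENNReal.ofReal (X n ω) ^ p ∂μ := by
  have hp0 : 0 < p := by linarith
  have hmeas (k : ℕ) : Measurable (X k) := (hX.stronglyMeasurable k).measurable.mono (𝒢.le k) le_rfl
  have hY0 (ω : Ω) :
      0 ≤ (Finset.range (n + 1)).sup' Finset.nonempty_range_add_one fun k ↦ X k ω :=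
    (hX0 0 ω).trans (Finset.le_sup' (fun k ↦ X k ω) (by simp))
  refine lintegral_rpow_le_of_mul_meas_le (hmeas n).ennreal_ofReal.aemeasurable
    (Finset.measurable_range_sup'' fun k _ ↦ hmeas k) hY0 hp ?_ fun ε ↦ ?_
  · have hmem : MemLp ((Finset.range (n + 1)).sup' Finset.nonempty_range_add_one X)
        (ENNReal.ofReal p) μ :=
      Finset.sup'_induction (p := (MemLp · (ENNReal.ofReal p) μ)) _ _ (fun _ ha _ hb ↦ ha.sup hb) fun k _ ↦ hXp k
    have hlt := lintegral_rpow_enorm_lt_top_of_eLpNorm_lt_top (by simpa using hp0)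
      ENNReal.ofReal_ne_top hmem.eLpNorm_lt_top
    rw [ENNReal.toReal_ofReal hp0.le] at hlt
    simp_rw [Finset.sup'_apply, Real.enorm_of_nonneg (hY0 _)] at hlt
    exact hlt.ne
  · refine (maximal_ineq hX hX0 n).trans_eq ?_
    exact ofReal_integral_eq_lintegral_ofReal (hX.integrable n).integrableOn (ae_of_all _ (hX0 n))

/-- **Doob's `L^p` inequality** for a nonnegative submartingale, for the supremum over all times. -/
theorem MeasureTheory.Submartingale.lintegral_iSup_rpow_le {Ω : Type*} {mΩ : MeasurableSpace Ω}
    {μ : Measure Ω} [IsFiniteMeasure μ] {𝒢 : Filtration ℕ mΩ} {X : ℕ → Ω → ℝ}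
    (hX : Submartingale X 𝒢 μ) (hX0 : 0 ≤ X) {p : ℝ} (hp : 1 < p)
    (hXp : ∀ n, MemLp (X n) (ENNReal.ofReal p) μ) :
    ∫⁻ ω, (⨆ n, ENNReal.ofReal (X n ω)) ^ p ∂μ ≤
      ENNReal.ofReal ((p / (p - 1)) ^ p) * ⨆ n, ∫⁻ ω, ENNReal.ofReal (X n ω) ^ p ∂μ := by
  have hp0 : 0 < p := by linarith
  have hmeas (k : ℕ) : Measurable (X k) := (hX.stronglyMeasurable k).measurable.mono (𝒢.le k) le_rfl
  let M (n : ℕ) (ω : Ω) : ℝ :=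
    (Finset.range (n + 1)).sup' Finset.nonempty_range_add_one fun k ↦ X k ω
  have hM : Monotone M := fun m n hmn ω ↦
    Finset.sup'_mono _ (Finset.range_mono (by lia)) Finset.nonempty_range_add_one
  calc ∫⁻ ω, (⨆ n, ENNReal.ofReal (X n ω)) ^ p ∂μ
      ≤ ∫⁻ ω, ⨆ n, ENNReal.ofReal (M n ω) ^ p ∂μ := by
        refine lintegral_mono fun ω ↦ ?_
        refine ((ENNReal.orderIsoRpow p hp0).map_iSup _).trans_le (iSup_mono fun n ↦ ?_)
        simp only [ENNReal.orderIsoRpow_apply]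
        gcongr
        exact Finset.le_sup' (fun k ↦ X k ω) (by simp)
    _ = ⨆ n, ∫⁻ ω, ENNReal.ofReal (M n ω) ^ p ∂μ := by
        refine lintegral_iSup (fun n ↦ ?_) fun m n hmn ω ↦ ?_
        · exact (Finset.measurable_range_sup'' fun k _ ↦ hmeas k).ennreal_ofReal.pow_const p
        · have := hM hmn ω
          dsimp only
          gcongr
    _ ≤ _ := by
        rw [ENNReal.mul_iSup]
        exact iSup_mono fun n ↦ hX.lintegral_sup'_rpow_le hX0 hp hXp n

/-- **Doob's `L^p` inequality** for the closed martingale of conditional expectations of `F`. -/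
theorem MeasureTheory.lintegral_iSup_condExp_rpow_le {Ω : Type*} {mΩ : MeasurableSpace Ω}
    {μ : Measure Ω} [IsFiniteMeasure μ] (𝒢 : Filtration ℕ mΩ) {F : Ω → ℝ} {p : ℝ} (hp : 1 < p)
    (hF : MemLp F (ENNReal.ofReal p) μ) :
    ∫⁻ ω, (⨆ n, ENNReal.ofReal ((μ[F | 𝒢 n]) ω)) ^ p ∂μ ≤
      ENNReal.ofReal ((p / (p - 1)) ^ p) * ∫⁻ ω, ‖F ω‖ₑ ^ p ∂μ := by
  have hp0 : 0 < p := by linarith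
  have hp1 : 1 ≤ ENNReal.ofReal p := by simpa using hp.le
  let X (n : ℕ) : Ω → ℝ := μ[F | 𝒢 n]
  have hmem (n : ℕ) : MemLp (X⁺ n) (ENNReal.ofReal p) μ := (hF.condExp hp1).pos_part
  have hofReal (n : ℕ) (ω : Ω) : ENNReal.ofReal (X⁺ n ω) = ENNReal.ofReal (X n ω) := by
    simp [posPart_def]
  have hDoob := (martingale_condExp F 𝒢 μ).submartingale.pos.lintegral_iSup_rpow_le
    (posPart_nonneg X) hp hmem
  change ∫⁻ ω, (⨆ n, ENNReal.ofReal (X⁺ n ω)) ^ p ∂μ ≤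
    _ * ⨆ n, ∫⁻ ω, ENNReal.ofReal (X⁺ n ω) ^ p ∂μ at hDoob
  simp_rw [hofReal] at hDoob
  refine hDoob.trans ?_
  gcongr
  refine iSup_le fun n ↦ ?_
  have hcontr : eLpNorm (X n) (ENNReal.ofReal p) μ ≤ eLpNorm F (ENNReal.ofReal p) μ :=
    eLpNorm_condExp_le_eLpNorm F hp1
  rw [eLpNorm_eq_lintegral_rpow_enorm_toReal (by simpa using hp0) ENNReal.ofReal_ne_top,
    eLpNorm_eq_lintegral_rpow_enorm_toReal (by simpa using hp0) ENNReal.ofReal_ne_top,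
    ENNReal.toReal_ofReal hp0.le, ENNReal.rpow_le_rpow_iff (one_div_pos.2 hp0)] at hcontr
  refine le_trans (lintegral_mono fun ω ↦ ?_) hcontr
  gcongr
  exact Real.ofReal_le_enorm _

/-- The `ℓ_∞` endpoint in the proof of Stein's inequality: for `p > 1`,
`E[sup_k ‖E[fₖ | F_{nₖ}]‖^p] ≤ (p/(p-1))^p E[(sup_k ‖fₖ‖)^p]`. -/
theorem stmt_12 {Ω H : Type*} {mΩ : MeasurableSpace Ω} {μ : Measure Ω} [IsProbabilityMeasure μ]
    [NormedAddCommGroup H] [InnerProductSpace ℝ H] [CompleteSpace H] [SecondCountableTopology H]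
    (𝒢 : Filtration ℕ mΩ) (f : ℕ → Ω → H) (hf : ∀ k, Integrable (f k) μ)
    (nk : ℕ → ℕ) (p : ℝ) (hp : 1 < p)
    (hsup : ∫⁻ ω, (⨆ k, (‖f k ω‖₊ : ℝ≥0∞)) ^ p ∂μ ≠ ∞) :
    ∫⁻ ω, (⨆ k, (‖(μ[f k | 𝒢 (nk k)]) ω‖₊ : ℝ≥0∞)) ^ p ∂μ ≤
      ENNReal.ofReal ((p / (p - 1)) ^ p) * ∫⁻ ω, (⨆ k, (‖f k ω‖₊ : ℝ≥0∞)) ^ p ∂μ := by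
  have hp0 : 0 < p := by linarith
  have hp1 : 1 ≤ ENNReal.ofReal p := by simpa using hp.le
  let g (ω : Ω) : ℝ≥0∞ := ⨆ k, (‖f k ω‖₊ : ℝ≥0∞)
  let F (ω : Ω) : ℝ := (g ω).toReal
  have hg : AEMeasurable g μ := AEMeasurable.iSup fun k ↦ (hf k).aestronglyMeasurable.enorm
  have hgtop : ∀ᵐ ω ∂μ, g ω < ∞ := by
    filter_upwards [ae_lt_top' (hg.pow_const p) hsup] with ω hω
    exact (ENNReal.rpow_lt_top_iff_of_pos hp0).1 hω
  have hFg : ∫⁻ ω, ‖F ω‖ₑ ^ p ∂μ = ∫⁻ ω, g ω ^ p ∂μ := by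
    refine lintegral_congr_ae ?_
    filter_upwards [hgtop] with ω hω
    simp only [F, Real.enorm_of_nonneg ENNReal.toReal_nonneg, ENNReal.ofReal_toReal hω.ne]
  have hF : MemLp F (ENNReal.ofReal p) μ := by
    refine ⟨hg.ennreal_toReal.aestronglyMeasurable, ?_⟩
    rw [eLpNorm_lt_top_iff_lintegral_rpow_enorm_lt_top (by simpa using hp0) ENNReal.ofReal_ne_top,
      ENNReal.toReal_ofReal hp0.le, hFg]
    exact hsup.lt_top
  have hfF (k : ℕ) : (fun ω ↦ ‖f k ω‖) ≤ᵐ[μ] F := by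
    filter_upwards [hgtop] with ω hω
    exact ENNReal.toReal_mono (a := ‖f k ω‖₊) hω.ne (le_iSup (fun k ↦ (‖f k ω‖₊ : ℝ≥0∞)) k)
  have hcond : ∀ᵐ ω ∂μ, ∀ k, ‖(μ[f k | 𝒢 (nk k)]) ω‖ ≤ (μ[F | 𝒢 (nk k)]) ω :=
    ae_all_iff.2 fun k ↦ (norm_condExp_le (f k)).trans
      (condExp_mono (hf k).norm (hF.integrable hp1) (hfF k))
  calc ∫⁻ ω, (⨆ k, (‖(μ[f k | 𝒢 (nk k)]) ω‖₊ : ℝ≥0∞)) ^ p ∂μ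
      ≤ ∫⁻ ω, (⨆ n, ENNReal.ofReal ((μ[F | 𝒢 n]) ω)) ^ p ∂μ := by
        refine lintegral_mono_ae ?_
        filter_upwards [hcond] with ω hω
        refine ENNReal.rpow_le_rpow (iSup_le fun k ↦ le_iSup_of_le (nk k) ?_) hp0.le
        rw [← enorm_eq_nnnorm, ← ofReal_norm]
        exact ENNReal.ofReal_le_ofReal (hω k)
    _ ≤ ENNReal.ofReal ((p / (p - 1)) ^ p) * ∫⁻ ω, ‖F ω‖ₑ ^ p ∂μ :=
        lintegral_iSup_condExp_rpow_le 𝒢 hp hF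
    _ = _ := by rw [hFg]
end

section
/- (Stein's inequality) Let (Fₙ) be a filtration, (fₖ) a sequence of H-valued random variables, and (nₖ) a sequence of indices. Then for every p ∈ (1, ∞) there is a constant C_p such that ‖(∑ₖ ‖E[fₖ | F_{nₖ}]‖²)^{1/2}‖_{L_p} ≤ C_p ‖(∑ₖ ‖fₖ‖²)^{1/2}‖_{L_p}. -/
open MeasureTheory
open scoped ENNReal NNReal

lemma ENNReal.rpow_le_rpow_add_mul_rpow_sub_one {u v y : ℝ≥0∞} {r : ℝ} (hr : 1 ≤ r)
    (h : u ≤ v + y) (hu : u ≠ ∞) :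
    u ^ r ≤ v ^ r + ENNReal.ofReal r * (y * u ^ (r - 1)) := by
  have hr0 : 0 < r := by linarith
  rcases eq_or_ne u 0 with rfl | hu0
  · simp [ENNReal.zero_rpow_of_pos hr0]
  rcases eq_or_ne v ∞ with rfl | hv
  · simp [ENNReal.top_rpow_of_pos hr0]
  rcases eq_or_ne y ∞ with rfl | hy
  · have h0 : u ^ (r - 1) ≠ 0 := by simp [hu, hu0]
    rw [ENNReal.top_mul h0, ENNReal.mul_top (by simpa using hr0)]
    simp
  lift u to ℝ≥0 using hu
  lift v to ℝ≥0 using hv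
  lift y to ℝ≥0 using hy
  have hu0 : 0 < (u : ℝ) := by
    have : u ≠ 0 := by simpa using hu0
    positivity
  have h : (u : ℝ) ≤ v + y := by exact_mod_cast h
  have key : (u : ℝ) ^ r ≤ (v : ℝ) ^ r + r * (y * (u : ℝ) ^ (r - 1)) := by
    have hb := one_add_mul_self_le_rpow_one_add (s := v / u - 1) (p := r)
      (by have : 0 ≤ (v : ℝ) / u := by positivity
          linarith) hr
    rw [add_sub_cancel, Real.div_rpow v.coe_nonneg u.coe_nonneg, le_div_iff₀ (by positivity)] at hb
    have hur : (u : ℝ) ^ r = u * (u : ℝ) ^ (r - 1) := by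
      rw [Real.rpow_sub_one hu0.ne']; field_simp
    have e : (1 + r * ((v : ℝ) / u - 1)) * (u : ℝ) ^ r
        = (u : ℝ) ^ r + r * ((v - u) * (u : ℝ) ^ (r - 1)) := by
      rw [hur]; field_simp
    rw [e] at hb
    have : (u - v) * (u : ℝ) ^ (r - 1) ≤ y * (u : ℝ) ^ (r - 1) :=
      mul_le_mul_of_nonneg_right (by linarith) (by positivity)
    nlinarith
  have := ENNReal.ofReal_le_ofReal key
  rw [ENNReal.ofReal_add (by positivity) (by positivity), ENNReal.ofReal_mul hr0.le,
    ENNReal.ofReal_mul y.coe_nonneg, ← ENNReal.ofReal_rpow_of_nonneg u.coe_nonneg hr0.le,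
    ← ENNReal.ofReal_rpow_of_nonneg v.coe_nonneg hr0.le,
    ← ENNReal.ofReal_rpow_of_nonneg u.coe_nonneg (by linarith)] at this
  simpa using this

lemma ENNReal.rpow_le_of_le_mul_rpow {a K : ℝ≥0∞} {s : ℝ} (hs : 0 < s) (ha : a ≠ ∞)
    (h : a ≤ K * a ^ (1 - s)) : a ^ s ≤ K := by
  rcases eq_or_ne a 0 with rfl | h0
  · simp [ENNReal.zero_rpow_of_pos hs]
  have h1 : a ^ (1 - s) ≠ 0 := by simp [ha, h0]
  have h2 : a ^ (1 - s) ≠ ∞ := by simp [ha, h0]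
  rw [← ENNReal.mul_le_mul_iff_left h1 h2, ← ENNReal.rpow_add _ _ h0 ha]
  simpa using h

lemma ENNReal.min_add_le_min_add (x y c : ℝ≥0∞) : min (x + y) c ≤ min x c + y := by
  rw [min_add]; exact min_le_min le_rfl le_self_add

section Stein

open scoped RealInnerProductSpace

variable {Ω : Type*} {mΩ : MeasurableSpace Ω} {μ : Measure Ω}

lemma MeasureTheory.lintegral_le_of_tendsto_of_monotone {φ : ℕ → Ω → ℝ≥0∞} {ψ : Ω → ℝ≥0∞}
    {K : ℝ≥0∞} (hφ : ∀ n, AEMeasurable (φ n) μ) (hmono : ∀ x, Monotone fun n ↦ φ n x)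
    (hlim : ∀ x, Filter.Tendsto (fun n ↦ φ n x) Filter.atTop (nhds (ψ x)))
    (hK : ∀ n, ∫⁻ x, φ n x ∂μ ≤ K) : ∫⁻ x, ψ x ∂μ ≤ K :=
  le_of_tendsto' (lintegral_tendsto_of_tendsto_of_monotone hφ (.of_forall hmono)
    (.of_forall hlim)) hK

lemma MeasureTheory.lintegral_condLExp_mul {m : MeasurableSpace Ω} (hm : m ≤ mΩ)
    [IsFiniteMeasure μ] {X φ : Ω → ℝ≥0∞} (hX : AEMeasurable X μ) (hφ : Measurable[m] φ) :
    ∫⁻ ω, μ⁻[X|m] ω * φ ω ∂μ = ∫⁻ ω, X ω * φ ω ∂μ := by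
  have hY : Measurable[mΩ] (μ⁻[X|m]) := (measurable_condLExp m μ X).mono hm le_rfl
  have htrim : (μ.withDensity (μ⁻[X|m])).trim hm = (μ.withDensity X).trim hm := by
    refine @Measure.ext _ m _ _ fun s hs ↦ ?_
    rw [trim_measurableSet_eq hm hs, trim_measurableSet_eq hm hs, withDensity_apply _ (hm s hs),
      withDensity_apply _ (hm s hs), setLIntegral_condLExp hm μ X hs]
  have h := congrArg (fun ν ↦ @lintegral _ m ν φ) htrim
  simp only [lintegral_trim hm hφ] at h
  have hφ' : AEMeasurable φ μ := (hφ.mono hm le_rfl).aemeasurable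
  rw [lintegral_withDensity_eq_lintegral_mul₀ hY.aemeasurable hφ',
    lintegral_withDensity_eq_lintegral_mul₀ hX hφ'] at h
  exact h

/-- The dual Doob inequality, for conditional expectations indexed in increasing order. -/
lemma MeasureTheory.lintegral_rpow_sum_range_condLExp_le [IsFiniteMeasure μ]
    (𝒢 : Filtration ℕ mΩ) {a : ℕ → Ω → ℝ≥0∞} (ha : ∀ n, AEMeasurable (a n) μ) {r : ℝ}
    (hr : 1 ≤ r) (M : ℕ) :
    (∫⁻ ω, (∑ n ∈ Finset.range M, μ⁻[a n|𝒢 n] ω) ^ r ∂μ) ^ (1 / r) ≤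
      ENNReal.ofReal r * (∫⁻ ω, (∑ n ∈ Finset.range M, a n ω) ^ r ∂μ) ^ (1 / r) := by
  have hr0 : 0 < r := by linarith
  set A : ℕ → Ω → ℝ≥0∞ := fun n ω ↦ ∑ k ∈ Finset.range n, μ⁻[a k|𝒢 k] ω
  have hA_le : ∀ n m, n ≤ m + 1 → Measurable[𝒢 m] (A n) := fun n m hnm ↦
    Finset.measurable_fun_sum _ fun k hk ↦ (measurable_condLExp _ μ _).mono
      (𝒢.mono (by have := Finset.mem_range.1 hk; omega)) le_rfl
  have hA_meas : ∀ n, Measurable (A n) := fun n ↦ (hA_le n n (by omega)).mono (𝒢.le n) le_rfl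
  have trunc : ∀ c : ℕ, ∀ n, ∫⁻ ω, min (A n ω) c ^ r ∂μ ≤
      ENNReal.ofReal r *
        ∫⁻ ω, (∑ k ∈ Finset.range n, a k ω) * min (A n ω) c ^ (r - 1) ∂μ := by
    intro c n
    induction n with
    | zero => simp [A, ENNReal.zero_rpow_of_pos hr0]
    | succ n ih =>
      have hT : Measurable[𝒢 n] fun ω ↦ min (A (n + 1) ω) (c : ℝ≥0∞) ^ (r - 1) :=
        ((hA_le (n + 1) n le_rfl).min measurable_const).pow_const _
      have hT' : Measurable fun ω ↦ min (A (n + 1) ω) (c : ℝ≥0∞) ^ (r - 1) :=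
        hT.mono (𝒢.le n) le_rfl
      calc
        ∫⁻ ω, min (A (n + 1) ω) c ^ r ∂μ ≤ ∫⁻ ω, (min (A n ω) c ^ r + ENNReal.ofReal r *
            (μ⁻[a n|𝒢 n] ω * min (A (n + 1) ω) c ^ (r - 1))) ∂μ := by
          refine lintegral_mono fun ω ↦ ENNReal.rpow_le_rpow_add_mul_rpow_sub_one hr ?_ ?_
          · simp only [A, Finset.sum_range_succ]
            exact ENNReal.min_add_le_min_add _ _ _
          · exact ne_top_of_le_ne_top (ENNReal.natCast_ne_top c) (min_le_right _ _)
        _ = ∫⁻ ω, min (A n ω) c ^ r ∂μ + ENNReal.ofReal r *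
            ∫⁻ ω, a n ω * min (A (n + 1) ω) c ^ (r - 1) ∂μ := by
          rw [lintegral_add_left (((hA_meas n).min measurable_const).pow_const _),
            lintegral_const_mul' _ _ ENNReal.ofReal_ne_top,
            lintegral_condLExp_mul (𝒢.le n) (ha n) hT]
        _ ≤ ENNReal.ofReal r *
              ∫⁻ ω, (∑ k ∈ Finset.range n, a k ω) * min (A (n + 1) ω) c ^ (r - 1) ∂μ +
            ENNReal.ofReal r * ∫⁻ ω, a n ω * min (A (n + 1) ω) c ^ (r - 1) ∂μ := by
          gcongr
          refine ih.trans ?_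
          gcongr with ω
          simp only [A, Finset.sum_range_succ]
          exact le_self_add
        _ = _ := by
          have hprod : AEMeasurable (fun ω ↦ a n ω * min (A (n + 1) ω) (c : ℝ≥0∞) ^ (r - 1)) μ :=
            (ha n).mul hT'.aemeasurable
          rw [← mul_add, ← lintegral_add_right' _ hprod]
          simp_rw [Finset.sum_range_succ, add_mul]
  have hX : AEMeasurable (fun ω ↦ ∑ n ∈ Finset.range M, a n ω) μ := by fun_prop
  have bound : ∀ c : ℕ, (∫⁻ ω, min (A M ω) c ^ r ∂μ) ^ (1 / r) ≤
      ENNReal.ofReal r * (∫⁻ ω, (∑ n ∈ Finset.range M, a n ω) ^ r ∂μ) ^ (1 / r) := by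
    intro c
    refine ENNReal.rpow_le_of_le_mul_rpow (by positivity) ?_ ?_
    · refine ne_top_of_le_ne_top ?_ (lintegral_mono (g := fun _ ↦ (c : ℝ≥0∞) ^ r) fun ω ↦
        ENNReal.rpow_le_rpow (min_le_right _ _) hr0.le)
      rw [lintegral_const]
      finiteness
    · refine (trunc c M).trans ?_
      rw [mul_assoc]
      gcongr
      have hold := ENNReal.lintegral_mul_norm_pow_le (μ := μ) (p := 1 / r) (q := 1 - 1 / r)
        (hX.pow_const r) ((((hA_meas M).min (measurable_const (a := (c : ℝ≥0∞)))).pow_const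
        r).aemeasurable) (by positivity) (by rw [sub_nonneg, div_le_one hr0]; exact hr) (by ring)
      refine le_trans (le_of_eq ?_) hold
      congr with ω
      rw [← ENNReal.rpow_mul, ← ENNReal.rpow_mul]
      congr 2
      · rw [mul_one_div_cancel hr0.ne', ENNReal.rpow_one]
      · field_simp
  rw [one_div, ENNReal.rpow_inv_le_iff hr0]
  refine lintegral_le_of_tendsto_of_monotone (φ := fun (c : ℕ) ω ↦ min (A M ω) c ^ r)
    (fun c ↦ (((hA_meas M).min measurable_const).pow_const r).aemeasurable) ?_ ?_ ?_
  · intro ω c d hcd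
    dsimp only
    gcongr
  · intro ω
    have := (tendsto_const_nhds (x := A M ω)).min ENNReal.tendsto_nat_nhds_top
    rw [min_eq_left le_top] at this
    exact (ENNReal.continuous_rpow_const.tendsto _).comp this
  · intro c
    have := bound c
    rwa [one_div, ENNReal.rpow_inv_le_iff hr0] at this

/-- The **dual Doob inequality**. -/
theorem MeasureTheory.lintegral_rpow_sum_condLExp_le [IsFiniteMeasure μ]
    (𝒢 : Filtration ℕ mΩ) {ι : Type*} (s : Finset ι) (nk : ι → ℕ) {b : ι → Ω → ℝ≥0∞}
    (hb : ∀ k, AEMeasurable (b k) μ) {r : ℝ} (hr : 1 ≤ r) :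
    (∫⁻ ω, (∑ k ∈ s, μ⁻[b k|𝒢 (nk k)] ω) ^ r ∂μ) ^ (1 / r) ≤
      ENNReal.ofReal r * (∫⁻ ω, (∑ k ∈ s, b k ω) ^ r ∂μ) ^ (1 / r) := by
  have hmaps : ∀ k ∈ s, nk k ∈ Finset.range (s.sup nk + 1) := fun k hk ↦
    Finset.mem_range_succ_iff.2 (Finset.le_sup hk)
  have h := lintegral_rpow_sum_range_condLExp_le (μ := μ) 𝒢
    (a := fun n ↦ ∑ k ∈ s with nk k = n, b k)
    (fun n ↦ Finset.aemeasurable_sum _ fun k _ ↦ hb k) hr (s.sup nk + 1)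
  have hright : ∀ ω, ∑ n ∈ Finset.range (s.sup nk + 1), (∑ k ∈ s with nk k = n, b k) ω
      = ∑ k ∈ s, b k ω := fun ω ↦ by
    simp_rw [Finset.sum_apply]
    exact Finset.sum_fiberwise_of_maps_to hmaps _
  have hleft : ∀ᵐ ω ∂μ, ∑ n ∈ Finset.range (s.sup nk + 1),
      μ⁻[∑ k ∈ s with nk k = n, b k|𝒢 n] ω = ∑ k ∈ s, μ⁻[b k|𝒢 (nk k)] ω := by
    have hsum : ∀ᵐ ω ∂μ, ∀ n, μ⁻[∑ k ∈ s with nk k = n, b k|𝒢 n] ω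
        = (∑ k ∈ s with nk k = n, μ⁻[b k|𝒢 n]) ω :=
      ae_all_iff.2 fun n ↦ condLExp_finsetSum (𝒢 n) _ hb
    filter_upwards [hsum] with ω hω
    simp_rw [hω, Finset.sum_apply]
    rw [← Finset.sum_fiberwise_of_maps_to hmaps]
    refine Finset.sum_congr rfl fun n _ ↦ Finset.sum_congr rfl fun k hk ↦ ?_
    rw [(Finset.mem_filter.1 hk).2]
  simp_rw [hright] at h
  rwa [lintegral_congr_ae (hleft.mono fun ω hω ↦ by rw [hω])] at h

lemma MeasureTheory.integrable_norm_sq_of_lintegral_rpow_ne_top [IsFiniteMeasure μ] {ι E : Type*}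
    [NormedAddCommGroup E] {s : Finset ι} {f : ι → Ω → E}
    (hf : ∀ k, AEStronglyMeasurable (f k) μ) {r : ℝ} (hr : 1 ≤ r)
    (h : ∫⁻ ω, (∑ k ∈ s, ‖f k ω‖ₑ ^ 2) ^ r ∂μ ≠ ∞) {k : ι} (hk : k ∈ s) :
    Integrable (fun ω ↦ ‖f k ω‖ ^ 2) μ := by
  refine ⟨(hf k).norm.pow 2, ?_⟩
  rw [hasFiniteIntegral_iff_enorm]
  calc
    ∫⁻ ω, ‖‖f k ω‖ ^ 2‖ₑ ∂μ ≤ ∫⁻ ω, (1 + (∑ k ∈ s, ‖f k ω‖ₑ ^ 2) ^ r) ∂μ := by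
      refine lintegral_mono fun ω ↦ ?_
      simp only [enorm_pow, enorm_norm]
      refine (Finset.single_le_sum (f := fun k ↦ ‖f k ω‖ₑ ^ 2) (fun _ _ ↦ zero_le) hk).trans ?_
      rcases le_total (∑ k ∈ s, ‖f k ω‖ₑ ^ 2) 1 with h1 | h1
      · exact h1.trans le_self_add
      · refine le_trans ?_ le_add_self
        simpa using ENNReal.rpow_le_rpow_of_exponent_le h1 hr
    _ < ∞ := by
      rw [lintegral_add_left measurable_const, lintegral_const]
      exact ENNReal.add_lt_top.2 ⟨by finiteness, h.lt_top⟩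

variable {H : Type*} [NormedAddCommGroup H] [InnerProductSpace ℝ H] [CompleteSpace H]

lemma MeasureTheory.enorm_condExp_sq_le {m : MeasurableSpace Ω} {f : Ω → H}
    (hf : Integrable (fun ω ↦ ‖f ω‖ ^ 2) μ) :
    ∀ᵐ ω ∂μ, ‖μ[f|m] ω‖ₑ ^ 2 ≤ μ⁻[fun ω ↦ ‖f ω‖ₑ ^ 2|m] ω := by
  have hE : (fun ω ↦ ‖f ω‖ₑ ^ 2) = fun ω ↦ ENNReal.ofReal (‖f ω‖ ^ 2) := by
    ext ω
    rw [ENNReal.ofReal_pow (norm_nonneg _), ofReal_norm]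
  have hJ := Integrable.norm_condExp_rpow_le (m := m) (f := f) (μ := μ) one_le_two
    (by simpa using hf)
  rw [hE]
  filter_upwards [hJ, condLExp_ofReal m hf (.of_forall fun ω ↦ by positivity)] with ω h1 h2
  rw [h2, ← ofReal_norm, ← ENNReal.ofReal_pow (norm_nonneg _)]
  refine ENNReal.ofReal_le_ofReal ?_
  simpa using h1

/-- **Stein's inequality** for finite families and `2 ≤ p`. -/
theorem MeasureTheory.stein_inequality_of_two_le [IsFiniteMeasure μ] (𝒢 : Filtration ℕ mΩ)
    {ι : Type*} (s : Finset ι) (nk : ι → ℕ) {f : ι → Ω → H}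
    (hf : ∀ k, AEStronglyMeasurable (f k) μ) {p : ℝ} (hp : 2 ≤ p) :
    (∫⁻ ω, (∑ k ∈ s, ‖μ[f k|𝒢 (nk k)] ω‖ₑ ^ 2) ^ (p / 2) ∂μ) ^ (1 / p) ≤
      ENNReal.ofReal (p / 2) ^ (1 / 2 : ℝ) *
        (∫⁻ ω, (∑ k ∈ s, ‖f k ω‖ₑ ^ 2) ^ (p / 2) ∂μ) ^ (1 / p) := by
  have hr : 1 ≤ p / 2 := by linarith
  by_cases htop : ∫⁻ ω, (∑ k ∈ s, ‖f k ω‖ₑ ^ 2) ^ (p / 2) ∂μ = ∞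
  · have h0 : ENNReal.ofReal (p / 2) ^ (1 / 2 : ℝ) ≠ 0 := by
      have : 0 < p := by linarith
      simp [ENNReal.rpow_eq_zero_iff, this]
    rw [htop, ENNReal.top_rpow_of_pos (by positivity), ENNReal.mul_top h0]
    exact le_top
  have hdual := lintegral_rpow_sum_condLExp_le (μ := μ) 𝒢 s nk
    (b := fun k ω ↦ ‖f k ω‖ₑ ^ 2) (fun k ↦ (hf k).enorm.pow_const 2) hr
  have hJ : ∀ᵐ ω ∂μ, ∀ k ∈ s, ‖μ[f k|𝒢 (nk k)] ω‖ₑ ^ 2 ≤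
      μ⁻[fun ω ↦ ‖f k ω‖ₑ ^ 2|𝒢 (nk k)] ω := by
    rw [Finset.eventually_all]
    exact fun k hk ↦ enorm_condExp_sq_le (integrable_norm_sq_of_lintegral_rpow_ne_top hf hr htop hk)
  have hle : ∫⁻ ω, (∑ k ∈ s, ‖μ[f k|𝒢 (nk k)] ω‖ₑ ^ 2) ^ (p / 2) ∂μ ≤
      ∫⁻ ω, (∑ k ∈ s, μ⁻[fun ω ↦ ‖f k ω‖ₑ ^ 2|𝒢 (nk k)] ω) ^ (p / 2) ∂μ := by
    refine lintegral_mono_ae ?_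
    filter_upwards [hJ] with ω hω
    gcongr with k hk
    exact hω k hk
  have hsq := ENNReal.rpow_le_rpow ((ENNReal.rpow_le_rpow hle (by positivity)).trans hdual)
    (by norm_num : (0 : ℝ) ≤ 1 / 2)
  have hexp : 1 / (p / 2) * (1 / 2) = 1 / p := by field_simp
  rwa [ENNReal.mul_rpow_of_nonneg _ _ (by norm_num), ← ENNReal.rpow_mul, ← ENNReal.rpow_mul,
    hexp] at hsq

lemma MeasureTheory.integral_inner_condExp_comm {m : MeasurableSpace Ω} (hm : m ≤ mΩ)
    [IsFiniteMeasure μ] {f g : Ω → H} (hf : Integrable f μ) (hg : Integrable g μ) {R : ℝ}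
    (hR : ∀ᵐ ω ∂μ, ‖g ω‖ ≤ R) :
    Integrable (fun ω ↦ ⟪μ[f|m] ω, g ω⟫) μ ∧
      ∫ ω, ⟪μ[f|m] ω, g ω⟫ ∂μ = ∫ ω, ⟪f ω, μ[g|m] ω⟫ ∂μ := by
  have hR' : ∀ᵐ ω ∂μ, ‖μ[g|m] ω‖ ≤ R := ae_bdd_norm_condExp_of_ae_bdd_norm hR
  have h1 : Integrable (fun ω ↦ innerSL ℝ (μ[f|m] ω) (g ω)) μ :=
    (innerSL ℝ).integrable_of_bilin_of_bdd_right R integrable_condExp hg.1 hR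
  have h2 : Integrable (fun ω ↦ innerSL ℝ (f ω) (μ[g|m] ω)) μ :=
    (innerSL ℝ).integrable_of_bilin_of_bdd_right R hf integrable_condExp.1 hR'
  refine ⟨h1, ?_⟩
  have e1 := integral_congr_ae (condExp_bilin_of_stronglyMeasurable_left (innerSL ℝ)
    (stronglyMeasurable_condExp (f := f) (m := m) (μ := μ)) h1 hg)
  have e2 := integral_congr_ae (condExp_bilin_of_stronglyMeasurable_right (innerSL ℝ)
    (stronglyMeasurable_condExp (f := g) (m := m) (μ := μ)) h2 hf)
  rw [integral_condExp hm] at e1 e2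
  exact e1.trans e2.symm

/-- **Stein's inequality** for finite families and `1 < p < 2`, by duality with the case
`2 ≤ q`. -/
theorem MeasureTheory.stein_inequality_of_lt_two [IsFiniteMeasure μ] (𝒢 : Filtration ℕ mΩ)
    {ι : Type*} (s : Finset ι) (nk : ι → ℕ) {f : ι → Ω → H}
    (hf : ∀ k, Integrable (f k) μ) {p q : ℝ} (hpq : p.HolderConjugate q) (hp : p < 2) :
    (∫⁻ ω, (∑ k ∈ s, ‖μ[f k|𝒢 (nk k)] ω‖ₑ ^ 2) ^ (p / 2) ∂μ) ^ (1 / p) ≤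
      ENNReal.ofReal (q / 2) ^ (1 / 2 : ℝ) *
        (∫⁻ ω, (∑ k ∈ s, ‖f k ω‖ₑ ^ 2) ^ (p / 2) ∂μ) ^ (1 / p) := by
  have hp1 : 1 < p := hpq.lt
  have hp0 : 0 < p := hpq.pos
  have hq0 : 0 < q := hpq.symm.pos
  have hpq' : (p - 1) * q = p := hpq.sub_one_mul_conj
  have hq : 2 ≤ q := by nlinarith
  set F : ι → Ω → H := fun k ↦ μ[f k|𝒢 (nk k)]
  have hFm : ∀ k, StronglyMeasurable (F k) := fun k ↦ stronglyMeasurable_condExp.mono (𝒢.le _)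
  set T : Ω → ℝ := fun ω ↦ ∑ k ∈ s, ‖F k ω‖ ^ 2 with hT
  have hTm : Measurable T :=
    Finset.measurable_fun_sum _ fun k _ ↦ (hFm k).norm.measurable.pow_const 2
  have hT0 : ∀ ω, 0 ≤ T ω := fun ω ↦ Finset.sum_nonneg fun k _ ↦ by positivity
  have hTE : ∀ ω, (∑ k ∈ s, ‖F k ω‖ₑ ^ 2) ^ (p / 2) = ENNReal.ofReal (T ω ^ (p / 2)) := by
    intro ω
    rw [← ENNReal.ofReal_rpow_of_nonneg (hT0 ω) (by positivity),
      ENNReal.ofReal_sum_of_nonneg fun k _ ↦ by positivity]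
    simp_rw [ENNReal.ofReal_pow (norm_nonneg _), ofReal_norm]
  set W : ℕ → Ω → ℝ := fun c ω ↦ if T ω ≤ c then T ω ^ (p / 2) else 0
  have hWm : ∀ c, Measurable (W c) := fun c ↦
    Measurable.ite (measurableSet_le hTm measurable_const) (hTm.pow_const _) measurable_const
  have hW0 : ∀ c ω, 0 ≤ W c ω := fun c ω ↦ by
    simp only [W]; split_ifs
    · exact Real.rpow_nonneg (hT0 ω) _
    · rfl
  have hWle : ∀ c ω, W c ω ≤ (c : ℝ) ^ (p / 2) := fun c ω ↦ by
    simp only [W]; split_ifs with h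
    · exact Real.rpow_le_rpow (hT0 ω) h (by positivity)
    · positivity
  set N := (∫⁻ ω, (∑ k ∈ s, ‖f k ω‖ₑ ^ 2) ^ (p / 2) ∂μ) ^ (1 / p) with hN
  have bound : ∀ c : ℕ, (∫⁻ ω, ENNReal.ofReal (W c ω) ∂μ) ^ (1 / p) ≤
      ENNReal.ofReal (q / 2) ^ (1 / 2 : ℝ) * N := by
    intro c
    set φ : Ω → ℝ := fun ω ↦ if T ω ≤ c then T ω ^ ((p - 2) / 2) else 0
    have hφm : Measurable φ :=
      Measurable.ite (measurableSet_le hTm measurable_const) (hTm.pow_const _) measurable_const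
    have hφ0 : ∀ ω, 0 ≤ φ ω := fun ω ↦ by
      simp only [φ]; split_ifs
      · exact Real.rpow_nonneg (hT0 ω) _
      · rfl
    have hφT : ∀ ω, φ ω * T ω = W c ω := fun ω ↦ by
      simp only [φ, W]; split_ifs
      · rcases (hT0 ω).eq_or_lt with h0 | h0
        · rw [← h0, mul_zero, Real.zero_rpow (by positivity)]
        · rw [← Real.rpow_add_one h0.ne']
          congr 1; ring
      · simp
    have hφTsq : ∀ ω, (φ ω ^ 2 * T ω) ^ (q / 2) = W c ω := fun ω ↦ by
      simp only [φ, W]; split_ifs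
      · rcases (hT0 ω).eq_or_lt with h0 | h0
        · rw [← h0, mul_zero, Real.zero_rpow (by positivity), Real.zero_rpow (by positivity)]
        · rw [← Real.rpow_natCast, ← Real.rpow_mul h0.le, ← Real.rpow_add_one h0.ne',
            ← Real.rpow_mul h0.le]
          congr 1; push_cast; linarith
      · simp [Real.zero_rpow (by positivity : q / 2 ≠ 0)]
    set g : ι → Ω → H := fun k ω ↦ φ ω • F k ω with hg
    have hgm : ∀ k, StronglyMeasurable (g k) := fun k ↦ hφm.stronglyMeasurable.smul (hFm k)
    have hgsum : ∀ ω, ∑ k ∈ s, ‖g k ω‖ ^ 2 = φ ω ^ 2 * T ω := fun ω ↦ by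
      simp_rw [hg, norm_smul, mul_pow, ← Finset.mul_sum, Real.norm_eq_abs, sq_abs, hT]
    have hgE : ∀ ω, (∑ k ∈ s, ‖g k ω‖ₑ ^ 2) ^ (q / 2) = ENNReal.ofReal (W c ω) := by
      intro ω
      rw [← hφTsq, ← hgsum, ← ENNReal.ofReal_rpow_of_nonneg (Finset.sum_nonneg fun k _ ↦ by
        positivity) (by positivity), ENNReal.ofReal_sum_of_nonneg fun k _ ↦ by positivity]
      simp_rw [ENNReal.ofReal_pow (norm_nonneg _), ofReal_norm]
    have hgbdd : ∀ k ∈ s, ∀ ω, ‖g k ω‖ ≤ (c : ℝ) ^ (p / 2 / q) := by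
      intro k hk ω
      have h1 : ‖g k ω‖ ^ 2 ≤ φ ω ^ 2 * T ω := by
        rw [← hgsum]
        exact Finset.single_le_sum (f := fun k ↦ ‖g k ω‖ ^ 2) (fun _ _ ↦ by positivity) hk
      have h2 : ‖g k ω‖ ^ q ≤ (c : ℝ) ^ (p / 2) := by
        refine le_trans (le_trans (le_of_eq ?_) (Real.rpow_le_rpow (by positivity) h1
          (by positivity : 0 ≤ q / 2))) ((hφTsq ω).trans_le (hWle c ω))
        rw [← Real.rpow_natCast, ← Real.rpow_mul (norm_nonneg _)]
        congr 1; push_cast; ring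
      have h3 := Real.rpow_le_rpow (by positivity) h2 (by positivity : 0 ≤ 1 / q)
      rw [← Real.rpow_mul (norm_nonneg _), ← Real.rpow_mul (by positivity),
        mul_one_div_cancel hq0.ne', Real.rpow_one] at h3
      simpa [div_eq_mul_inv] using h3
    have hgint : ∀ k ∈ s, Integrable (g k) μ := fun k hk ↦
      Integrable.of_bound (hgm k).aestronglyMeasurable _ (.of_forall (hgbdd k hk))
    have hcomm := fun k (hk : k ∈ s) ↦ integral_inner_condExp_comm (𝒢.le (nk k)) (hf k)
      (hgint k hk) (.of_forall (hgbdd k hk))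
    have hinner : ∀ ω, ∑ k ∈ s, ⟪F k ω, g k ω⟫ = W c ω := fun ω ↦ by
      simp_rw [hg, real_inner_smul_right, real_inner_self_eq_norm_sq, ← Finset.mul_sum]
      exact hφT ω
    have hWint : Integrable (W c) μ :=
      Integrable.of_bound (hWm c).aestronglyMeasurable ((c : ℝ) ^ (p / 2)) (.of_forall fun ω ↦ by
        rw [Real.norm_of_nonneg (hW0 c ω)]; exact hWle c ω)
    have hCS : ∀ ω, ∑ k ∈ s, ‖f k ω‖ₑ * ‖μ[g k|𝒢 (nk k)] ω‖ₑ ≤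
        (∑ k ∈ s, ‖f k ω‖ₑ ^ 2) ^ (1 / 2 : ℝ) *
          (∑ k ∈ s, ‖μ[g k|𝒢 (nk k)] ω‖ₑ ^ 2) ^ (1 / 2 : ℝ) := fun ω ↦ by
      simpa using ENNReal.inner_le_Lp_mul_Lq s (fun k ↦ ‖f k ω‖ₑ)
        (fun k ↦ ‖μ[g k|𝒢 (nk k)] ω‖ₑ) Real.HolderConjugate.two_two
    have hmain : ∫⁻ ω, ENNReal.ofReal (W c ω) ∂μ ≤ N *
        (∫⁻ ω, (∑ k ∈ s, ‖μ[g k|𝒢 (nk k)] ω‖ₑ ^ 2) ^ (q / 2) ∂μ) ^ (1 / q) := by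
      calc
        ∫⁻ ω, ENNReal.ofReal (W c ω) ∂μ = ENNReal.ofReal (∫ ω, W c ω ∂μ) :=
          (ofReal_integral_eq_lintegral_ofReal hWint (.of_forall (hW0 c))).symm
        _ = ENNReal.ofReal (∑ k ∈ s, ∫ ω, ⟪f k ω, μ[g k|𝒢 (nk k)] ω⟫ ∂μ) := by
          simp_rw [← hinner]
          rw [integral_finsetSum _ fun k hk ↦ (hcomm k hk).1,
            Finset.sum_congr rfl fun k hk ↦ (hcomm k hk).2]
        _ ≤ ∑ k ∈ s, ∫⁻ ω, ‖f k ω‖ₑ * ‖μ[g k|𝒢 (nk k)] ω‖ₑ ∂μ := by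
          refine (Real.ofReal_le_enorm _).trans ((enorm_sum_le _ _).trans ?_)
          gcongr with k hk
          refine (enorm_integral_le_lintegral_enorm _).trans ?_
          gcongr with ω
          simp only [enorm_eq_nnnorm]
          exact_mod_cast nnnorm_inner_le_nnnorm (𝕜 := ℝ) (f k ω) (μ[g k|𝒢 (nk k)] ω)
        _ = ∫⁻ ω, ∑ k ∈ s, ‖f k ω‖ₑ * ‖μ[g k|𝒢 (nk k)] ω‖ₑ ∂μ :=
          (lintegral_finsetSum' _ fun k _ ↦
            (hf k).1.enorm.mul integrable_condExp.1.enorm).symm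
        _ ≤ ∫⁻ ω, (∑ k ∈ s, ‖f k ω‖ₑ ^ 2) ^ (1 / 2 : ℝ) *
              (∑ k ∈ s, ‖μ[g k|𝒢 (nk k)] ω‖ₑ ^ 2) ^ (1 / 2 : ℝ) ∂μ := lintegral_mono hCS
        _ ≤ _ := by
          refine (ENNReal.lintegral_mul_le_Lp_mul_Lq μ hpq
            ((Finset.aemeasurable_fun_sum _ fun k _ ↦ (hf k).1.enorm.pow_const 2).pow_const _)
            ((Finset.aemeasurable_fun_sum _ fun k _ ↦
              integrable_condExp.1.enorm.pow_const 2).pow_const _)).trans_eq ?_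
          simp_rw [hN, ← ENNReal.rpow_mul, one_div_mul_eq_div]
    have hstein := stein_inequality_of_two_le (μ := μ) 𝒢 s nk
      (fun k ↦ (hgm k).aestronglyMeasurable) hq
    simp_rw [hgE] at hstein
    refine ENNReal.rpow_le_of_le_mul_rpow (by positivity) ?_ ?_
    · refine ne_top_of_le_ne_top ?_ (lintegral_mono fun ω ↦ ENNReal.ofReal_le_ofReal (hWle c ω))
      rw [lintegral_const]
      finiteness
    · refine hmain.trans ((mul_le_mul_right hstein N).trans (le_of_eq ?_))
      have : 1 - 1 / p = 1 / q := by
        have := hpq.inv_add_inv_eq_one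
        simp only [one_div]; linarith
      rw [this]
      ring
  rw [one_div, ENNReal.rpow_inv_le_iff hp0]
  refine (lintegral_congr hTE).trans_le ?_
  refine lintegral_le_of_tendsto_of_monotone (φ := fun c ω ↦ ENNReal.ofReal (W c ω))
    (fun c ↦ (hWm c).ennreal_ofReal.aemeasurable) ?_ ?_ ?_
  · intro ω c d hcd
    refine ENNReal.ofReal_le_ofReal ?_
    by_cases h : T ω ≤ c
    · have h' : T ω ≤ d := h.trans (by exact_mod_cast hcd)
      simp [W, h, h']
    · have : W c ω = 0 := if_neg h
      rw [this]
      exact hW0 d ω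
  · intro ω
    obtain ⟨c, hc⟩ := exists_nat_ge (T ω)
    refine tendsto_atTop_of_eventually_const (i₀ := c) fun d hd ↦ ?_
    have h' : T ω ≤ d := hc.trans (by exact_mod_cast hd)
    simp [W, h']
  · intro c
    have := bound c
    rwa [one_div, ENNReal.rpow_inv_le_iff hp0] at this

/-- **Stein's inequality** for finite families. -/
theorem MeasureTheory.exists_stein_inequality_finset {p : ℝ} (hp : 1 < p) :
    ∃ C : ℝ≥0∞, C ≠ ∞ ∧ ∀ {Ω : Type*} {mΩ : MeasurableSpace Ω} {μ : Measure Ω}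
      [IsFiniteMeasure μ] (𝒢 : Filtration ℕ mΩ) {ι : Type*} (s : Finset ι) (nk : ι → ℕ)
      {f : ι → Ω → H}, (∀ k, Integrable (f k) μ) →
      (∫⁻ ω, (∑ k ∈ s, ‖μ[f k|𝒢 (nk k)] ω‖ₑ ^ 2) ^ (p / 2) ∂μ) ^ (1 / p) ≤
        C * (∫⁻ ω, (∑ k ∈ s, ‖f k ω‖ₑ ^ 2) ^ (p / 2) ∂μ) ^ (1 / p) := by
  rcases lt_or_ge p 2 with h2 | h2
  · exact ⟨_, ENNReal.rpow_ne_top_of_nonneg (by norm_num) ENNReal.ofReal_ne_top,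
      fun 𝒢 _ s nk _ hf ↦
        stein_inequality_of_lt_two 𝒢 s nk hf (Real.HolderConjugate.conjExponent hp) h2⟩
  · exact ⟨_, ENNReal.rpow_ne_top_of_nonneg (by norm_num) ENNReal.ofReal_ne_top,
      fun 𝒢 _ s nk _ hf ↦ stein_inequality_of_two_le 𝒢 s nk (fun k ↦ (hf k).1) h2⟩

end Stein

/-- Stein's inequality: for every `p ∈ (1, ∞)` there is a constant `C_p`, depending only on
`p` (and the Hilbert space `H`), such that for every filtered probability space, every sequence
`(fₖ)` of `H`-valued integrable random variables and every sequence of indices `(nₖ)`,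
`‖(∑ₖ ‖E[fₖ | F_{nₖ}]‖²)^{1/2}‖_{L_p} ≤ C_p ‖(∑ₖ ‖fₖ‖²)^{1/2}‖_{L_p}`. -/
theorem stmt_13 {H : Type*} [NormedAddCommGroup H] [InnerProductSpace ℝ H] [CompleteSpace H]
    [SecondCountableTopology H] (p : ℝ) (hp : 1 < p) :
    ∃ C : ℝ≥0∞, C ≠ ∞ ∧
      ∀ (Ω : Type) (mΩ : MeasurableSpace Ω) (μ : Measure Ω), IsProbabilityMeasure μ →
        ∀ (𝒢 : Filtration ℕ mΩ) (f : ℕ → Ω → H), (∀ k, Integrable (f k) μ) →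
          ∀ nk : ℕ → ℕ,
            (∫⁻ ω, (∑' k, (‖(μ[f k | 𝒢 (nk k)]) ω‖₊ : ℝ≥0∞) ^ 2) ^ (p / 2) ∂μ) ^ (1 / p) ≤
              C * (∫⁻ ω, (∑' k, (‖f k ω‖₊ : ℝ≥0∞) ^ 2) ^ (p / 2) ∂μ) ^ (1 / p) := by
  obtain ⟨C, hC, hstein⟩ := exists_stein_inequality_finset (H := H) hp
  refine ⟨C, hC, fun Ω mΩ μ _ 𝒢 f hf nk ↦ ?_⟩
  have hp0 : 0 < p := by linarith
  rw [one_div, ENNReal.rpow_inv_le_iff hp0]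
  refine lintegral_le_of_tendsto_of_monotone
    (φ := fun n ω ↦ (∑ k ∈ Finset.range n, ‖μ[f k|𝒢 (nk k)] ω‖ₑ ^ 2) ^ (p / 2)) (fun n ↦
      (Finset.aemeasurable_fun_sum _ fun k _ ↦
        integrable_condExp.1.enorm.pow_const 2).pow_const _) ?_ ?_ ?_
  · intro ω n m hnm
    dsimp only
    gcongr
  · intro ω
    exact (ENNReal.continuous_rpow_const.tendsto _).comp (ENNReal.tendsto_nat_tsum _)
  · intro n
    rw [← ENNReal.rpow_inv_le_iff hp0, ← one_div]
    refine (hstein 𝒢 (Finset.range n) nk hf).trans ?_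
    gcongr with ω
    exact ENNReal.sum_le_tsum _
end
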